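/- arXiv:1706.04958 — 11 statements merged into one kernel-verified Lean document; each statement's English description precedes it below -/
import Mathlib

section
/- The affine surface 𝒮₂ is geodesically complete: for every initial point (p¹,p²) ∈ ℝ² and every initial velocity (v¹,v²) ∈ ℝ², there exists a C² curve σ = (x¹,x²) : ℝ → ℝ² with σ(0) = (p¹,p²), σ'(0) = (v¹,v²), satisfying ẍ¹(t) = ẋ¹(t)·ẋ²(t) and ẍ²(t) = 0 for all t ∈ ℝ. -/
/-!
The second equation forces `x₂` to be affine, `x₂ t = p₂ + v₂ t`, and the first then becomes the
linear equation `ẍ₁ = v₂ ẋ₁`, so `ẋ₁ t = v₁ exp (v₂ t)`. Integrating gives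
`x₁ t = p₁ + (v₁ / v₂) (exp (v₂ t) - 1)` if `v₂ ≠ 0` and `x₁ t = p₁ + v₁ t` otherwise, both smooth
on all of `ℝ`.
-/

/-- A `C²` primitive of `v * exp (a t)` with prescribed value at `0`: the first coordinate of the
geodesic whose second coordinate has constant velocity `a`. -/
theorem exists_primitive_exp (p v a : ℝ) :
    ∃ x : ℝ → ℝ, ContDiff ℝ 2 x ∧ x 0 = p ∧ ∀ t, HasDerivAt x (v * Real.exp (a * t)) t := by
  by_cases ha : a = 0
  · subst ha
    refine ⟨fun t => p + v * t, by fun_prop, by simp, fun t => ?_⟩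
    simpa using ((hasDerivAt_id t).const_mul v).const_add p
  · refine ⟨fun t => p + v / a * (Real.exp (a * t) - 1), by fun_prop, by simp, fun t => ?_⟩
    have h := (((((hasDerivAt_id t).const_mul a).exp).sub_const 1).const_mul (v / a)).const_add p
    simp only [id, mul_one] at h
    have e : v * Real.exp (a * t) = v / a * (Real.exp (a * t) * a) := by field_simp
    rw [e]
    exact h

/-- The affine surface 𝒮₂ (nonzero Christoffel symbols
Γ₁₂¹ = Γ₂₁¹ = −1/2, geodesic equations ẍ¹ = ẋ¹ẋ², ẍ² = 0) is
geodesically complete. -/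
theorem S2_geodesically_complete (p₁ p₂ v₁ v₂ : ℝ) :
    ∃ x₁ x₂ : ℝ → ℝ, ContDiff ℝ 2 x₁ ∧ ContDiff ℝ 2 x₂ ∧
      x₁ 0 = p₁ ∧ x₂ 0 = p₂ ∧ deriv x₁ 0 = v₁ ∧ deriv x₂ 0 = v₂ ∧
      (∀ t : ℝ, deriv (deriv x₁) t = deriv x₁ t * deriv x₂ t) ∧
      (∀ t : ℝ, deriv (deriv x₂) t = 0) := by
  obtain ⟨x₁, hx₁, h0, hd⟩ := exists_primitive_exp p₁ v₁ v₂
  have hd₁ : deriv x₁ = fun t => v₁ * Real.exp (v₂ * t) := funext fun t => (hd t).deriv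
  have hd₂ : deriv (fun t : ℝ => p₂ + v₂ * t) = fun _ => v₂ := by
    funext t
    simp
  refine ⟨x₁, fun t => p₂ + v₂ * t, hx₁, by fun_prop, h0, by simp, by simp [hd₁], by rw [hd₂],
    fun t => ?_, fun t => by simp [hd₂]⟩
  rw [hd₁, hd₂]
  have h := ((((hasDerivAt_id t).const_mul v₂).exp).const_mul v₁).deriv
  simp only [id, mul_one] at h
  rw [h, mul_assoc]
end

section
/- The exponential map of 𝒮₂ is a bijection at every basepoint: for all P ∈ ℝ² and Q ∈ ℝ² there exists a unique v ∈ ℝ² such that some C² curve σ = (x¹,x²) : ℝ → ℝ² satisfying ẍ¹ = ẋ¹ẋ² and ẍ² = 0 has σ(0) = P, σ'(0) = v, and σ(1) = Q. -/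
/-!
The system decouples: `ẍ² = 0` makes `x²` affine with constant speed `b`, and then `ẋ¹` solves the
linear equation `ẏ = b y`, so `ẋ¹ t = a * exp (b t)`. The geodesic with initial velocity `(a, b)`
therefore has displacement `(a * C b, b)` at time `1`, where `C b = ∫₀¹ exp (b s) ds > 0`
(`geodesic_formula`). Hence `b` is determined by the second coordinate and, since `C b ≠ 0`, `a` by
the first; conversely the explicit formula with these values is a geodesic.
-/

/-- The primitive `t ↦ ∫₀ᵗ exp (b s) ds`. The integral form, as opposed to `(exp (b t) - 1) / b`,
also covers `b = 0`. -/
noncomputable def expPrim (b t : ℝ) : ℝ := ∫ s in (0 : ℝ)..t, Real.exp (b * s)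

lemma expPrim_zero (b : ℝ) : expPrim b 0 = 0 := by simp [expPrim]

lemma hasDerivAt_expPrim (b t : ℝ) : HasDerivAt (expPrim b) (Real.exp (b * t)) t := by
  have hc : Continuous fun s : ℝ => Real.exp (b * s) := by fun_prop
  exact intervalIntegral.integral_hasDerivAt_right (hc.intervalIntegrable _ _)
    hc.stronglyMeasurable.stronglyMeasurableAtFilter hc.continuousAt

lemma deriv_expPrim (b : ℝ) : deriv (expPrim b) = fun t => Real.exp (b * t) :=
  funext fun t => (hasDerivAt_expPrim b t).deriv

lemma contDiff_expPrim (b : ℝ) : ContDiff ℝ 2 (expPrim b) := by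
  rw [show (2 : WithTop ℕ∞) = 1 + 1 by norm_num, contDiff_succ_iff_deriv]
  refine ⟨fun t => (hasDerivAt_expPrim b t).differentiableAt, by simp, ?_⟩
  rw [deriv_expPrim]
  fun_prop

lemma expPrim_one_pos (b : ℝ) : 0 < expPrim b 1 := by
  have hc : Continuous fun s : ℝ => Real.exp (b * s) := by fun_prop
  exact intervalIntegral.intervalIntegral_pos_of_pos (hc.intervalIntegrable _ _)
    (fun s => Real.exp_pos _) one_pos

/-- Two functions with the same derivative have the same increments from `0`. -/
lemma sub_eq_sub_of_hasDerivAt {f g h : ℝ → ℝ} (hf : ∀ t, HasDerivAt f (h t) t)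
    (hg : ∀ t, HasDerivAt g (h t) t) (t : ℝ) : f t - g t = f 0 - g 0 :=
  is_const_of_deriv_eq_zero (f := fun t => f t - g t)
    (fun t => ((hf t).sub (hg t)).differentiableAt)
    (fun t => ((hf t).sub (hg t)).deriv.trans (sub_self _)) t 0

/-- Explicit form of the geodesics. -/
lemma geodesic_formula {x₁ x₂ : ℝ → ℝ} (h₁ : ContDiff ℝ 2 x₁) (h₂ : ContDiff ℝ 2 x₂)
    (e₁ : ∀ t : ℝ, deriv (deriv x₁) t = deriv x₁ t * deriv x₂ t)
    (e₂ : ∀ t : ℝ, deriv (deriv x₂) t = 0) (t : ℝ) :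
    x₁ t = x₁ 0 + deriv x₁ 0 * expPrim (deriv x₂ 0) t ∧ x₂ t = x₂ 0 + deriv x₂ 0 * t := by
  have d₁ : ∀ t, HasDerivAt x₁ (deriv x₁ t) t :=
    fun t => (h₁.differentiable (by norm_num) t).hasDerivAt
  have d₂ : ∀ t, HasDerivAt x₂ (deriv x₂ t) t :=
    fun t => (h₂.differentiable (by norm_num) t).hasDerivAt
  have dd : ∀ {x : ℝ → ℝ}, ContDiff ℝ 2 x → Differentiable ℝ (deriv x) := fun {x} hx => by
    rw [show (2 : WithTop ℕ∞) = 1 + 1 by norm_num, contDiff_succ_iff_deriv] at hx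
    exact hx.2.2.differentiable (by norm_num)
  have v₂ : ∀ t, deriv x₂ t = deriv x₂ 0 := fun t => is_const_of_deriv_eq_zero (dd h₂) e₂ t 0
  have v₁ : ∀ t, deriv x₁ t = deriv x₁ 0 * Real.exp (deriv x₂ 0 * t) := by
    intro t
    set b := deriv x₂ 0
    -- `ẋ¹ t * exp (-b t)` is constant.
    have hd : ∀ t, HasDerivAt (fun t => deriv x₁ t * Real.exp (-(b * t))) 0 t := by
      intro t
      have h := (dd h₁ t).hasDerivAt.mul (((hasDerivAt_id t).const_mul b).neg.exp)
      rw [e₁, v₂] at h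
      refine HasDerivAt.congr_deriv (f := fun t => deriv x₁ t * Real.exp (-(b * t))) h ?_
      ring
    have hk := is_const_of_deriv_eq_zero (fun t => (hd t).differentiableAt)
      (fun t => (hd t).deriv) t 0
    simp only [mul_zero, neg_zero, Real.exp_zero, mul_one] at hk
    rw [← hk, mul_assoc, ← Real.exp_add]
    simp
  constructor
  · have := sub_eq_sub_of_hasDerivAt (fun t => v₁ t ▸ d₁ t)
      (fun t => (hasDerivAt_expPrim (deriv x₂ 0) t).const_mul (deriv x₁ 0)) t
    simp only [expPrim_zero] at this
    linarith
  · have := sub_eq_sub_of_hasDerivAt (fun t => v₂ t ▸ d₂ t)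
      (fun t => by simpa using (hasDerivAt_id t).const_mul (deriv x₂ 0)) t
    simp only [mul_zero] at this
    linarith

/-- The exponential map of 𝒮₂ is a bijection at every basepoint:
for all P, Q ∈ ℝ² there is a unique initial velocity v such that some geodesic
of 𝒮₂ starting at P with velocity v reaches Q at time 1. -/
theorem S2_exp_bijective (P Q : ℝ × ℝ) :
    ∃! v : ℝ × ℝ, ∃ x₁ x₂ : ℝ → ℝ, ContDiff ℝ 2 x₁ ∧ ContDiff ℝ 2 x₂ ∧
      (∀ t : ℝ, deriv (deriv x₁) t = deriv x₁ t * deriv x₂ t) ∧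
      (∀ t : ℝ, deriv (deriv x₂) t = 0) ∧
      x₁ 0 = P.1 ∧ x₂ 0 = P.2 ∧ deriv x₁ 0 = v.1 ∧ deriv x₂ 0 = v.2 ∧
      x₁ 1 = Q.1 ∧ x₂ 1 = Q.2 := by
  obtain ⟨b, hb⟩ : ∃ b, b = Q.2 - P.2 := ⟨_, rfl⟩
  obtain ⟨a, ha⟩ : ∃ a, a = (Q.1 - P.1) / expPrim b 1 := ⟨_, rfl⟩
  have hC := (expPrim_one_pos b).ne'
  refine ⟨(a, b), ?_, ?_⟩
  · have D₁ : deriv (fun t => P.1 + a * expPrim b t) = fun t => a * Real.exp (b * t) :=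
      funext fun t => (((hasDerivAt_expPrim b t).const_mul a).const_add P.1).deriv
    have D₂ : deriv (fun t : ℝ => P.2 + b * t) = fun _ => b :=
      funext fun t => by simp
    refine ⟨fun t => P.1 + a * expPrim b t, fun t => P.2 + b * t,
      contDiff_const.add (contDiff_const.mul (contDiff_expPrim b)), by fun_prop,
      fun t => ?_, fun t => ?_, ?_, ?_, ?_, ?_, ?_, ?_⟩
    · rw [D₁, D₂]
      have h := (((hasDerivAt_id t).const_mul b).exp.const_mul a).deriv
      simp only [id, mul_one] at h
      rw [h, mul_assoc]
    · rw [D₂]; simp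
    · simp [expPrim_zero]
    · simp
    · rw [D₁]; simp
    · rw [D₂]
    · simp only [ha]; field_simp; ring
    · simp [hb]
  · rintro ⟨a', b'⟩ ⟨x₁, x₂, h₁, h₂, e₁, e₂, p₁, p₂, v₁, v₂, q₁, q₂⟩
    obtain ⟨f₁, f₂⟩ := geodesic_formula h₁ h₂ e₁ e₂ 1
    rw [p₁, v₁, v₂, q₁] at f₁
    rw [p₂, v₂, q₂] at f₂
    have hb' : b' = b := by simp only at f₂; linarith
    subst hb'
    have ha' : a' = a := by rw [ha, eq_div_iff hC, f₁]; simp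
    rw [ha']
end

section
/- The affine surface S̃₃ is geodesically complete: for every initial point (p¹,p²) ∈ ℝ² and every initial velocity (v¹,v²) ∈ ℝ², there exists a C² curve σ = (x¹,x²) : ℝ → ℝ² with σ(0) = (p¹,p²), σ'(0) = (v¹,v²), satisfying ẍ¹(t) + x¹(t)·(ẋ²(t))² = 0 and ẍ²(t) = 0 for all t ∈ ℝ. -/
/-!
The second equation forces `x₂ t = p₂ + v₂ t`, which turns the first into the harmonic oscillator
`x₁'' + v₂² x₁ = 0`. Its solutions are explicit and entire: `p₁ cos (v₂ t) + (v₁ / v₂) sin (v₂ t)`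
when `v₂ ≠ 0`, and the affine function `p₁ + v₁ t` when `v₂ = 0`.
-/

/-- Differentiating a trigonometric combination of frequency `w` gives another one, so this lemma
computes both the velocity and the acceleration of the oscillator. -/
lemma deriv_mul_cos_add_mul_sin (a b w : ℝ) :
    deriv (fun t : ℝ => a * Real.cos (w * t) + b * Real.sin (w * t)) =
      fun t => (b * w) * Real.cos (w * t) + (-(a * w)) * Real.sin (w * t) := by
  funext t
  have h : HasDerivAt (fun t : ℝ => w * t) w t := by
    simpa using (hasDerivAt_id t).const_mul w
  refine ((h.cos.const_mul a).add (h.sin.const_mul b)).deriv.trans ?_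
  ring

/-- The affine surface S̃₃ (only nonzero Christoffel symbol
Γ₂₂¹ = x¹, geodesic equations ẍ¹ + x¹(ẋ²)² = 0, ẍ² = 0) is geodesically
complete. -/
theorem S3tilde_geodesically_complete (p₁ p₂ v₁ v₂ : ℝ) :
    ∃ x₁ x₂ : ℝ → ℝ, ContDiff ℝ 2 x₁ ∧ ContDiff ℝ 2 x₂ ∧
      x₁ 0 = p₁ ∧ x₂ 0 = p₂ ∧ deriv x₁ 0 = v₁ ∧ deriv x₂ 0 = v₂ ∧
      (∀ t : ℝ, deriv (deriv x₁) t + x₁ t * (deriv x₂ t) ^ 2 = 0) ∧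
      (∀ t : ℝ, deriv (deriv x₂) t = 0) := by
  by_cases h : v₂ = 0
  · refine ⟨fun t => p₁ + v₁ * t, fun t => p₂ + v₂ * t, by fun_prop, by fun_prop, ?_⟩
    simp [h]
  · refine ⟨fun t => p₁ * Real.cos (v₂ * t) + (v₁ / v₂) * Real.sin (v₂ * t),
      fun t => p₂ + v₂ * t, by fun_prop, by fun_prop, by simp, by simp, ?_, ?_, ?_, ?_⟩
    · simp [deriv_mul_cos_add_mul_sin, h]
    · simp
    · intro t
      have h₂ : deriv (fun t : ℝ => p₂ + v₂ * t) t = v₂ := by simp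
      simp only [deriv_mul_cos_add_mul_sin, h₂]
      ring
    · simp
end

section
/- The exponential map of S̃₃ at the origin is not injective: for every α ∈ ℝ, the curve σ_α(t) = ((α/(2π))·sin(2πt), 2πt) is a C² solution of ẍ¹ + x¹(ẋ²)² = 0, ẍ² = 0 with σ_α(0) = (0,0), σ_α'(0) = (α, 2π), and σ_α(1) = (0, 2π); hence all the distinct initial velocities (α, 2π), α ∈ ℝ, give geodesics from (0,0) that reach the same point (0, 2π) at time t = 1. -/
/-! With `ω = 2π` the first coordinate `(α / ω) sin (ω t)` solves the harmonic oscillator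
equation `ẍ + ω² x = 0`, which is the geodesic equation along the affine second coordinate `ω t`.
The endpoint at `t = 1` does not depend on `α` because `sin` vanishes at `2π`. -/

open Real

theorem deriv_linear_coord (c : ℝ) : deriv (fun s : ℝ => c * s) = fun _ => c := by
  funext t
  simp

theorem deriv_oscillator (α : ℝ) :
    deriv (fun s : ℝ => α / (2 * π) * Real.sin (2 * π * s)) =
      fun s => α * Real.cos (2 * π * s) := by
  funext t
  have h := (((hasDerivAt_id t).const_mul (2 * π)).sin.const_mul (α / (2 * π))).deriv
  simp only [id] at h
  rw [h]
  field_simp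

theorem deriv_deriv_oscillator (α t : ℝ) :
    deriv (deriv (fun s : ℝ => α / (2 * π) * Real.sin (2 * π * s))) t =
      -(2 * π * α * Real.sin (2 * π * t)) := by
  rw [deriv_oscillator]
  have h := (((hasDerivAt_id t).const_mul (2 * π)).cos.const_mul α).deriv
  simp only [id] at h
  rw [h]
  ring

/-- The exponential map of S̃₃ at the origin is not injective:
for every α ∈ ℝ the curve σ_α(t) = ((α/(2π))·sin(2πt), 2πt) is a geodesic of
S̃₃ with σ_α(0) = (0,0), σ_α'(0) = (α, 2π) and σ_α(1) = (0, 2π). -/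
theorem S3tilde_exp_not_injective (α : ℝ) :
    ContDiff ℝ 2 (fun t : ℝ => α / (2 * π) * Real.sin (2 * π * t)) ∧
    ContDiff ℝ 2 (fun t : ℝ => 2 * π * t) ∧
    (∀ t : ℝ,
      deriv (deriv (fun s : ℝ => α / (2 * π) * Real.sin (2 * π * s))) t +
        (α / (2 * π) * Real.sin (2 * π * t)) *
          (deriv (fun s : ℝ => 2 * π * s) t) ^ 2 = 0) ∧
    (∀ t : ℝ, deriv (deriv (fun s : ℝ => 2 * π * s)) t = 0) ∧
    (α / (2 * π) * Real.sin (2 * π * 0) = 0) ∧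
    ((2 : ℝ) * π * 0 = 0) ∧
    deriv (fun s : ℝ => α / (2 * π) * Real.sin (2 * π * s)) 0 = α ∧
    deriv (fun s : ℝ => 2 * π * s) 0 = 2 * π ∧
    (α / (2 * π) * Real.sin (2 * π * 1) = 0) ∧
    ((2 : ℝ) * π * 1 = 2 * π) := by
  refine ⟨by fun_prop, by fun_prop, fun t => ?_, fun t => ?_, by simp, by simp, ?_, ?_,
    by simp, by simp⟩
  · rw [deriv_deriv_oscillator, deriv_linear_coord]
    field_simp
    ring
  · rw [deriv_linear_coord]
    simp
  · rw [deriv_oscillator]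
    simp
  · rw [deriv_linear_coord]
end

section
/- The map (x¹,x²) ↦ (e^{−x¹}, x²) is an affine embedding of 𝒮₁ into 𝒮₂: if (u,v) : I → ℝ² is a C² curve on an open interval I satisfying the 𝒮₁ geodesic equations ü = u̇² + u̇v̇ and v̈ = 0, then the curve τ(t) = (e^{−u(t)}, v(t)) satisfies the 𝒮₂ geodesic equations ÿ¹ = ẏ¹ẏ² and ÿ² = 0 on I. -/
/-!
With `y = exp (-u)` one has `y' = -u' y` and `y'' = (u' ^ 2 - u'') y`. The geodesic equation
`u'' = u' ^ 2 + u' v'` cancels the quadratic term and leaves `y'' = -u' v' y = y' v'`.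
The second component of the curve is unchanged, so its equation carries over verbatim.
-/

/-- The map (x¹,x²) ↦ (e^{−x¹}, x²) is an affine embedding of
𝒮₁ into 𝒮₂: it carries solutions of the 𝒮₁ geodesic equations
ü = u̇² + u̇v̇, v̈ = 0 on an open interval I to solutions of the 𝒮₂
geodesic equations ÿ¹ = ẏ¹ẏ², ÿ² = 0 on I. -/
theorem S1_embeds_in_S2 (a b : ℝ) (u v : ℝ → ℝ)
    (hu : ContDiffOn ℝ 2 u (Set.Ioo a b)) (hv : ContDiffOn ℝ 2 v (Set.Ioo a b))
    (geo₁ : ∀ t ∈ Set.Ioo a b,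
      deriv (deriv u) t = (deriv u t) ^ 2 + deriv u t * deriv v t)
    (geo₂ : ∀ t ∈ Set.Ioo a b, deriv (deriv v) t = 0) :
    (∀ t ∈ Set.Ioo a b,
      deriv (deriv (fun s : ℝ => Real.exp (-(u s)))) t =
        deriv (fun s : ℝ => Real.exp (-(u s))) t * deriv v t) ∧
    (∀ t ∈ Set.Ioo a b, deriv (deriv v) t = 0) := by
  refine ⟨fun t ht => ?_, geo₂⟩
  have hderiv : ∀ s ∈ Set.Ioo a b,
      HasDerivAt (fun s : ℝ => Real.exp (-(u s))) (Real.exp (-(u s)) * -(deriv u s)) s := by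
    intro s hs
    have hus : DifferentiableAt ℝ u s :=
      (hu.differentiableOn (by norm_num)).differentiableAt (isOpen_Ioo.mem_nhds hs)
    exact hus.hasDerivAt.neg.exp
  have hu' : DifferentiableAt ℝ (deriv u) t := by
    have h1 : ContDiffOn ℝ 1 (deriv u) (Set.Ioo a b) :=
      hu.deriv_of_isOpen isOpen_Ioo (by norm_num)
    exact (h1.differentiableOn (by norm_num)).differentiableAt (isOpen_Ioo.mem_nhds ht)
  -- The first-derivative formula holds on a neighbourhood of `t`, so it may be differentiated.
  have heq : deriv (fun s : ℝ => Real.exp (-(u s))) =ᶠ[nhds t]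
      fun s => Real.exp (-(u s)) * -(deriv u s) := by
    filter_upwards [isOpen_Ioo.mem_nhds ht] with s hs using (hderiv s hs).deriv
  rw [heq.deriv_eq, ((hderiv t ht).fun_mul hu'.hasDerivAt.fun_neg).deriv, (hderiv t ht).deriv,
    geo₁ t ht]
  ring
end

section
/- The map (x¹,x²) ↦ (e^{−x¹}, x²) is an affine embedding of 𝒮₃ into S̃₃: if (u,v) : I → ℝ² is a C² curve on an open interval I satisfying the 𝒮₃ geodesic equations ü = u̇² + v̇² and v̈ = 0, then the curve τ(t) = (e^{−u(t)}, v(t)) satisfies the S̃₃ geodesic equations ÿ¹ + y¹(ẏ²)² = 0 and ÿ² = 0 on I. -/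
/-! For `y = exp (-u)` one has `y' = -u' y` and `y'' = (u'² - u'') y`, so the equation
`u'' = u'² + v'²` turns into `y'' = -v'² y`; the second coordinate is unchanged. -/

/-- The map (x¹,x²) ↦ (e^{−x¹}, x²) is an affine embedding of
𝒮₃ into S̃₃: it carries solutions of the 𝒮₃ geodesic equations
ü = u̇² + v̇², v̈ = 0 on an open interval I to solutions of the S̃₃
geodesic equations ÿ¹ + y¹(ẏ²)² = 0, ÿ² = 0 on I. -/
theorem S3_embeds_in_S3tilde (a b : ℝ) (u v : ℝ → ℝ)
    (hu : ContDiffOn ℝ 2 u (Set.Ioo a b)) (hv : ContDiffOn ℝ 2 v (Set.Ioo a b))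
    (geo₁ : ∀ t ∈ Set.Ioo a b,
      deriv (deriv u) t = (deriv u t) ^ 2 + (deriv v t) ^ 2)
    (geo₂ : ∀ t ∈ Set.Ioo a b, deriv (deriv v) t = 0) :
    (∀ t ∈ Set.Ioo a b,
      deriv (deriv (fun s : ℝ => Real.exp (-(u s)))) t +
        Real.exp (-(u t)) * (deriv v t) ^ 2 = 0) ∧
    (∀ t ∈ Set.Ioo a b, deriv (deriv v) t = 0) := by
  refine ⟨fun t ht => ?_, geo₂⟩
  have hd : ∀ s ∈ Set.Ioo a b, HasDerivAt u (deriv u s) s := fun s hs =>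
    ((hu.differentiableOn (by norm_num)).differentiableAt
      (isOpen_Ioo.mem_nhds hs)).hasDerivAt
  have hdd : HasDerivAt (deriv u) (deriv (deriv u) t) t :=
    (((hu.deriv_of_isOpen (m := 1) isOpen_Ioo (by norm_num)).differentiableOn
      (by norm_num)).differentiableAt (isOpen_Ioo.mem_nhds ht)).hasDerivAt
  -- The second derivative at `t` requires the formula for the first on a neighbourhood of `t`.
  have h1 : deriv (fun s : ℝ => Real.exp (-(u s))) =ᶠ[nhds t]
      fun s => Real.exp (-(u s)) * -(deriv u s) := by
    filter_upwards [isOpen_Ioo.mem_nhds ht] with s hs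
    exact (hd s hs).fun_neg.exp.deriv
  have h2 := ((hd t ht).fun_neg.exp.fun_mul hdd.fun_neg).deriv
  rw [h1.deriv_eq, h2, geo₁ t ht]
  ring
end

section
/- The hyperbolic plane ℍ² is geodesically complete: for every point (p¹,p²) with p¹ > 0 and every v ∈ ℝ², there exists a C² curve σ = (x¹,x²) : ℝ → ℝ² with x¹(t) > 0 for all t ∈ ℝ, σ(0) = (p¹,p²), σ'(0) = v, satisfying x¹ẍ¹ − (ẋ¹)² + (ẋ²)² = 0 and x¹ẍ² − 2ẋ¹ẋ² = 0 on all of ℝ. -/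
/-!
The geodesic is written down explicitly. For `v = 0` it is constant. Otherwise let
`s = √(v₁² + v₂²) / p₁` be its hyperbolic speed, `a = v₁ / (p₁ s)` and
`D t = cosh (s t) - a sinh (s t)`. Then
`x₁ = p₁ / D` and `x₂ = p₂ + (v₂ / s) sinh (s t) / D`.
The curve is defined for all time because `|a| ≤ 1` forces `D > 0` (`cosh_sub_mul_sinh_pos`).
The second coordinate satisfies `x₂' = v₂ / D²`, and the geodesic equations follow from
`D'' = s² D` and the first integral `p₁² (s² D² - D'²) = v₂²`
(`geodesic_equations_of_denominator`).
-/

lemma cosh_sub_mul_sinh_pos {a : ℝ} (ha : a ^ 2 ≤ 1) (u : ℝ) :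
    0 < Real.cosh u - a * Real.sinh u := by
  have h1 : |a| ≤ 1 := (sq_le_one_iff_abs_le_one a).1 ha
  have h2 : |Real.sinh u| < Real.cosh u := by
    apply abs_lt_of_sq_lt_sq _ (Real.cosh_pos u).le
    linarith [Real.cosh_sq u]
  have h3 : a * Real.sinh u ≤ |Real.sinh u| := by
    calc a * Real.sinh u ≤ |a * Real.sinh u| := le_abs_self _
      _ = |a| * |Real.sinh u| := abs_mul _ _
      _ ≤ |Real.sinh u| := mul_le_of_le_one_left (abs_nonneg _) h1
  linarith

/-- If `D > 0` solves `D'' = k D` (with `E = D'`), has first integral `p² (k D² - D'²) = w²`,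
and `N' = w / D²`, then `(p / D, N)` solves the geodesic equations. The derivatives of the
coordinates are recorded too, for reading off the initial velocity. -/
lemma geodesic_equations_of_denominator {p w k : ℝ} {D E N : ℝ → ℝ}
    (hpos : ∀ t, 0 < D t) (hD : ∀ t, HasDerivAt D (E t) t)
    (hE : ∀ t, HasDerivAt E (k * D t) t) (hN : ∀ t, HasDerivAt N (w / D t ^ 2) t)
    (hint : ∀ t, p ^ 2 * (k * D t ^ 2 - E t ^ 2) = w ^ 2) :
    (deriv (fun t => p / D t) = fun t => -(p * E t) / D t ^ 2) ∧
    (deriv N = fun t => w / D t ^ 2) ∧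
    (∀ t, p / D t * deriv (deriv fun t => p / D t) t
      - (deriv (fun t => p / D t) t) ^ 2 + (deriv N t) ^ 2 = 0) ∧
    (∀ t, p / D t * deriv (deriv N) t
      - 2 * deriv (fun t => p / D t) t * deriv N t = 0) := by
  have hne : ∀ t, D t ≠ 0 := fun t => (hpos t).ne'
  have d1 : deriv (fun t => p / D t) = fun t => -(p * E t) / D t ^ 2 := by
    ext t
    rw [((hasDerivAt_const t p).fun_div (hD t) (hne t)).deriv]
    ring
  have d2 : deriv N = fun t => w / D t ^ 2 := funext fun t => (hN t).deriv
  refine ⟨d1, d2, fun t => ?_, fun t => ?_⟩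
  · have h := (((hE t).const_mul p).fun_neg.fun_div ((hD t).fun_pow 2) (pow_ne_zero 2 (hne t))).deriv
    rw [d1, d2, h]
    have := hne t
    field_simp
    push_cast
    linear_combination -(D t) * hint t
  · have h := ((hasDerivAt_const t w).fun_div ((hD t).fun_pow 2) (pow_ne_zero 2 (hne t))).deriv
    rw [d1, d2, h]
    have := hne t
    field_simp
    push_cast
    ring

/-- The hyperbolic plane ℍ² (upper half plane x¹ > 0, geodesic
equations x¹ẍ¹ − (ẋ¹)² + (ẋ²)² = 0, x¹ẍ² − 2ẋ¹ẋ² = 0) is geodesically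
complete. -/
theorem H2_geodesically_complete (p₁ p₂ v₁ v₂ : ℝ) (hp : 0 < p₁) :
    ∃ x₁ x₂ : ℝ → ℝ, ContDiff ℝ 2 x₁ ∧ ContDiff ℝ 2 x₂ ∧
      (∀ t : ℝ, 0 < x₁ t) ∧
      x₁ 0 = p₁ ∧ x₂ 0 = p₂ ∧ deriv x₁ 0 = v₁ ∧ deriv x₂ 0 = v₂ ∧
      (∀ t : ℝ,
        x₁ t * deriv (deriv x₁) t - (deriv x₁ t) ^ 2 + (deriv x₂ t) ^ 2 = 0) ∧
      (∀ t : ℝ,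
        x₁ t * deriv (deriv x₂) t - 2 * deriv x₁ t * deriv x₂ t = 0) := by
  rcases (add_nonneg (sq_nonneg v₁) (sq_nonneg v₂)).eq_or_lt with hv | hv
  · obtain rfl : v₁ = 0 := by nlinarith [sq_nonneg v₁, sq_nonneg v₂]
    obtain rfl : v₂ = 0 := by nlinarith [sq_nonneg v₂]
    exact ⟨fun _ => p₁, fun _ => p₂, contDiff_const, contDiff_const, fun _ => hp, by simp⟩
  obtain ⟨s, hs, hs2⟩ : ∃ s : ℝ, 0 < s ∧ p₁ ^ 2 * s ^ 2 = v₁ ^ 2 + v₂ ^ 2 :=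
    ⟨√(v₁ ^ 2 + v₂ ^ 2) / p₁, by positivity, by
      rw [div_pow, Real.sq_sqrt hv.le]; field_simp⟩
  obtain ⟨a, ha⟩ : ∃ a : ℝ, p₁ * s * a = v₁ := ⟨v₁ / (p₁ * s), by field_simp⟩
  -- `p₁² s² (1 - a²) = v₂² ≥ 0`
  have ha1 : a ^ 2 ≤ 1 := by
    have h : 0 < p₁ ^ 2 * s ^ 2 := by positivity
    have h' : p₁ ^ 2 * s ^ 2 * a ^ 2 = v₁ ^ 2 := by rw [← ha]; ring
    nlinarith [sq_nonneg v₂]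
  have hpos := fun t : ℝ => cosh_sub_mul_sinh_pos ha1 (s * t)
  have hlin : ∀ t : ℝ, HasDerivAt (fun t => s * t) s t := fun t => by
    simpa using (hasDerivAt_id t).const_mul s
  have hc : ∀ t : ℝ, HasDerivAt (fun t => Real.cosh (s * t)) (Real.sinh (s * t) * s) t :=
    fun t => (hlin t).cosh
  have hsh : ∀ t : ℝ, HasDerivAt (fun t => Real.sinh (s * t)) (Real.cosh (s * t) * s) t :=
    fun t => (hlin t).sinh
  have hD : ∀ t : ℝ, HasDerivAt (fun t => Real.cosh (s * t) - a * Real.sinh (s * t))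
      (s * Real.sinh (s * t) - a * s * Real.cosh (s * t)) t := fun t => by
    refine HasDerivAt.congr_deriv ((hc t).fun_sub ((hsh t).const_mul a)) ?_
    ring
  have hE : ∀ t : ℝ, HasDerivAt (fun t => s * Real.sinh (s * t) - a * s * Real.cosh (s * t))
      (s ^ 2 * (Real.cosh (s * t) - a * Real.sinh (s * t))) t := fun t => by
    refine HasDerivAt.congr_deriv (((hsh t).const_mul s).fun_sub ((hc t).const_mul (a * s))) ?_
    ring
  have hN : ∀ t : ℝ, HasDerivAt (fun t => p₂ + v₂ / s * Real.sinh (s * t) /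
      (Real.cosh (s * t) - a * Real.sinh (s * t)))
      (v₂ / (Real.cosh (s * t) - a * Real.sinh (s * t)) ^ 2) t := fun t => by
    refine HasDerivAt.congr_deriv ((((hsh t).const_mul (v₂ / s)).fun_div (hD t) (hpos t).ne').const_add p₂) ?_
    have := (hpos t).ne'
    field_simp
    linear_combination v₂ * Real.cosh_sq (s * t)
  have hint : ∀ t : ℝ, p₁ ^ 2 * (s ^ 2 * (Real.cosh (s * t) - a * Real.sinh (s * t)) ^ 2
      - (s * Real.sinh (s * t) - a * s * Real.cosh (s * t)) ^ 2) = v₂ ^ 2 := fun t => by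
    linear_combination (p₁ ^ 2 * s ^ 2 * (1 - a ^ 2)) * Real.cosh_sq (s * t) + hs2
      - (p₁ * s * a + v₁) * ha
  obtain ⟨d1, d2, g1, g2⟩ := geodesic_equations_of_denominator hpos hD hE hN hint
  have hcd : ContDiff ℝ 2 (fun t : ℝ => Real.cosh (s * t) - a * Real.sinh (s * t)) := by
    fun_prop
  refine ⟨fun t => p₁ / (Real.cosh (s * t) - a * Real.sinh (s * t)),
    fun t => p₂ + v₂ / s * Real.sinh (s * t) / (Real.cosh (s * t) - a * Real.sinh (s * t)),
    contDiff_const.fun_div hcd fun t => (hpos t).ne',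
    contDiff_const.add (ContDiff.fun_div (by fun_prop) hcd fun t => (hpos t).ne'),
    fun t => div_pos hp (hpos t), by simp, by simp, ?_, ?_, g1, g2⟩
  · rw [d1]
    simp
    linear_combination ha
  · rw [d2]
    simp
end

section
/- For all constants a, b ∈ ℝ, the Type B affine surface with Christoffel symbols Γ₁₁¹ = −1/x¹, Γ₁₁² = a/x¹, Γ₁₂² = Γ₂₁² = b/x¹ (all others zero) is geodesically complete: for every point (p¹,p²) with p¹ > 0 and every v ∈ ℝ², there exists a C² curve σ = (x¹,x²) : ℝ → ℝ² with x¹(t) > 0 for all t ∈ ℝ, σ(0) = (p¹,p²), σ'(0) = v, satisfying x¹ẍ¹ − (ẋ¹)² = 0 and x¹ẍ² + a(ẋ¹)² + 2b·ẋ¹ẋ² = 0 on all of ℝ. (Taking a = 0, b = c ≠ 0 gives 𝒮₄(c); taking a = 1, b = −1/2 gives 𝒮₅.) -/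
/-!
The first geodesic equation says that `ẋ¹ / x¹` is constant, so `x¹ t = p₁ exp (k t)` with
`k = v₁ / p₁`; this is positive for all time. Dividing the second equation by `x¹` then leaves the
linear equation `u' + 2 b k u = - a k² p₁ exp (k t)` for the velocity `u = ẋ²`. Variation of
constants gives `u t = exp (-2 b k t) (v₂ - a k² p₁ ∫₀ᵗ exp ((k + 2 b k) s) ds)`, and `x²` is a
primitive of `u`. Keeping both primitives as integrals (`exists_primitive`) gives formulas that
are also valid in the resonant cases `k + 2 b k = 0` and `2 b k = 0`.
-/

/-- A `C¹` function on the line has a global `C²` primitive with prescribed value at `0`. -/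
lemma exists_primitive {f : ℝ → ℝ} (hf : ContDiff ℝ 1 f) (c : ℝ) :
    ∃ F : ℝ → ℝ, F 0 = c ∧ (∀ t, HasDerivAt F (f t) t) ∧ ContDiff ℝ 2 F := by
  have hd : ∀ t, HasDerivAt (fun t => c + ∫ s in (0 : ℝ)..t, f s) (f t) t := fun t =>
    (hf.continuous.integral_hasStrictDerivAt 0 t).hasDerivAt.const_add c
  refine ⟨fun t => c + ∫ s in (0 : ℝ)..t, f s, by simp, hd, ?_⟩
  rw [show (2 : WithTop ℕ∞) = 1 + 1 by norm_num, contDiff_succ_iff_deriv]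
  refine ⟨fun t => (hd t).differentiableAt, by simp, ?_⟩
  rwa [funext fun t => (hd t).deriv]

/-- For all a, b ∈ ℝ, the Type B affine surface with
Christoffel symbols Γ₁₁¹ = −1/x¹, Γ₁₁² = a/x¹, Γ₁₂² = Γ₂₁² = b/x¹ is
geodesically complete.  (a = 0, b = c ≠ 0 gives 𝒮₄(c); a = 1, b = −1/2
gives 𝒮₅.) -/
theorem TypeB_S4_S5_geodesically_complete (a b p₁ p₂ v₁ v₂ : ℝ) (hp : 0 < p₁) :
    ∃ x₁ x₂ : ℝ → ℝ, ContDiff ℝ 2 x₁ ∧ ContDiff ℝ 2 x₂ ∧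
      (∀ t : ℝ, 0 < x₁ t) ∧
      x₁ 0 = p₁ ∧ x₂ 0 = p₂ ∧ deriv x₁ 0 = v₁ ∧ deriv x₂ 0 = v₂ ∧
      (∀ t : ℝ, x₁ t * deriv (deriv x₁) t - (deriv x₁ t) ^ 2 = 0) ∧
      (∀ t : ℝ,
        x₁ t * deriv (deriv x₂) t + a * (deriv x₁ t) ^ 2 +
          2 * b * deriv x₁ t * deriv x₂ t = 0) := by
  obtain ⟨k, hk⟩ : ∃ k, p₁ * k = v₁ := ⟨v₁ / p₁, by field_simp⟩
  have hE : ∀ r t : ℝ, HasDerivAt (fun t => Real.exp (r * t)) (r * Real.exp (r * t)) t := by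
    intro r t
    simpa [mul_comm] using ((hasDerivAt_id t).const_mul r).exp
  obtain ⟨G, hG0, hG, hGc⟩ := exists_primitive
    (f := fun t => Real.exp ((k + 2 * b * k) * t)) (by fun_prop) 0
  have hGc1 : ContDiff ℝ 1 G := hGc.of_le (by norm_num)
  obtain ⟨X, hX0, hX, hXc⟩ := exists_primitive
    (f := fun t => Real.exp (-(2 * b * k) * t) * (v₂ - a * k ^ 2 * p₁ * G t)) (by fun_prop) p₂
  have d1 : deriv (fun t => p₁ * Real.exp (k * t)) = fun t => p₁ * (k * Real.exp (k * t)) :=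
    funext fun t => ((hE k t).const_mul p₁).deriv
  have d2 : deriv (fun t => p₁ * (k * Real.exp (k * t))) =
      fun t => p₁ * (k * (k * Real.exp (k * t))) :=
    funext fun t => (((hE k t).const_mul k).const_mul p₁).deriv
  have e1 := funext fun t => (hX t).deriv
  refine ⟨fun t => p₁ * Real.exp (k * t), X, by fun_prop, hXc, fun t => by positivity,
    by simp, hX0, by simp [d1, hk], by simp [e1, hG0], fun t => ?_, fun t => ?_⟩
  · rw [d1, d2]
    ring
  · have e2 := ((hE (-(2 * b * k)) t).mul (((hG t).const_mul (a * k ^ 2 * p₁)).const_sub v₂)).deriv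
    have hexp : Real.exp (-(2 * b * k) * t) * Real.exp ((k + 2 * b * k) * t)
        = Real.exp (k * t) := by
      rw [← Real.exp_add]
      ring_nf
    rw [d1, e1]
    erw [e2]
    linear_combination (-(p₁ * Real.exp (k * t) * (a * k ^ 2 * p₁))) * hexp
end

section
/- Non-null 𝕃²-geodesics trace hyperbolas: let σ = (x¹,x²) be an 𝕃²-geodesic on an open interval I, fix t₀ ∈ I, and set c := ẋ²(t₀)/(x¹(t₀))² and λ := ((ẋ²(t₀))² − (ẋ¹(t₀))²)/(x¹(t₀))². If c ≠ 0, then there exists β ∈ ℝ such that (x¹(t))² − λ/c² = (x²(t) + β)² for all t ∈ I. -/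
/-!
Along a geodesic three quantities are conserved: `ẋ²/(x¹)²` (equal to `c`),
`(ẋ²)²/(x¹)² − (ẋ¹)²/(x¹)²` (equal to `λ`), and `ẋ¹/(c x¹) − x²` (called `β`).
Hence `(x² + β)² = (ẋ¹)²/(c² (x¹)²)`, while `ẋ² = c (x¹)²` turns the second conservation law into
`(x¹)² − λ/c² = (ẋ¹)²/(c² (x¹)²)`, the same value.
-/

/-- An 𝕃²-geodesic on a set `I ⊆ ℝ`: a C² curve `(x₁, x₂)` with `x₁ > 0` on `I`
satisfying `x¹ẍ¹ − (ẋ¹)² − (ẋ²)² = 0` and `x¹ẍ² − 2ẋ¹ẋ² = 0` on `I`. -/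
def IsL2Geodesic (x₁ x₂ : ℝ → ℝ) (I : Set ℝ) : Prop :=
  ContDiffOn ℝ 2 x₁ I ∧ ContDiffOn ℝ 2 x₂ I ∧ (∀ t ∈ I, 0 < x₁ t) ∧
  (∀ t ∈ I, x₁ t * deriv (deriv x₁) t - (deriv x₁ t) ^ 2 - (deriv x₂ t) ^ 2 = 0) ∧
  (∀ t ∈ I, x₁ t * deriv (deriv x₂) t - 2 * deriv x₁ t * deriv x₂ t = 0)

theorem eq_of_hasDerivAt_zero {I : Set ℝ} (hI : IsOpen I) (hI' : I.OrdConnected)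
    {f : ℝ → ℝ} (hf : ∀ t ∈ I, HasDerivAt f 0 t) {s t : ℝ} (hs : s ∈ I) (ht : t ∈ I) :
    f s = f t :=
  hI.is_const_of_deriv_eq_zero hI'.isPreconnected
    (fun x hx => (hf x hx).differentiableAt.differentiableWithinAt)
    (fun x hx => (hf x hx).deriv) hs ht

theorem hasDerivAt_of_contDiffOn_two {I : Set ℝ} (hI : IsOpen I) {f : ℝ → ℝ}
    (hf : ContDiffOn ℝ 2 f I) {t : ℝ} (ht : t ∈ I) :
    HasDerivAt f (deriv f t) t ∧ HasDerivAt (deriv f) (deriv (deriv f) t) t := by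
  have h1 : ContDiffOn ℝ 1 (deriv f) I := hf.deriv_of_isOpen hI (by norm_num)
  exact ⟨((hf.differentiableOn (by norm_num)).differentiableAt (hI.mem_nhds ht)).hasDerivAt,
    ((h1.differentiableOn (by norm_num)).differentiableAt (hI.mem_nhds ht)).hasDerivAt⟩

/-- Non-null 𝕃²-geodesics trace hyperbolas: with
c := ẋ²(t₀)/(x¹(t₀))² ≠ 0 and λ := ((ẋ²(t₀))² − (ẋ¹(t₀))²)/(x¹(t₀))²,
there is β ∈ ℝ with (x¹)² − λ/c² = (x² + β)² on I. -/
theorem L2_geodesics_are_hyperbolas (I : Set ℝ) (hI : IsOpen I)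
    (hI' : I.OrdConnected) (x₁ x₂ : ℝ → ℝ) (hgeo : IsL2Geodesic x₁ x₂ I)
    (t₀ : ℝ) (ht₀ : t₀ ∈ I) (c lam : ℝ)
    (hc : c = deriv x₂ t₀ / (x₁ t₀) ^ 2)
    (hlam : lam = ((deriv x₂ t₀) ^ 2 - (deriv x₁ t₀) ^ 2) / (x₁ t₀) ^ 2)
    (hc0 : c ≠ 0) :
    ∃ β : ℝ, ∀ t ∈ I, (x₁ t) ^ 2 - lam / c ^ 2 = (x₂ t + β) ^ 2 := by
  obtain ⟨hx, hy, hpos, h1, h2⟩ := hgeo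
  have hne : ∀ t ∈ I, x₁ t ≠ 0 := fun t ht => (hpos t ht).ne'
  have dx := fun t (ht : t ∈ I) => hasDerivAt_of_contDiffOn_two hI hx ht
  have dy := fun t (ht : t ∈ I) => hasDerivAt_of_contDiffOn_two hI hy ht
  have hv : ∀ t ∈ I, deriv x₂ t = c * x₁ t ^ 2 := by
    intro t ht
    have h : deriv x₂ t / x₁ t ^ 2 = deriv x₂ t₀ / x₁ t₀ ^ 2 := by
      refine eq_of_hasDerivAt_zero (f := fun t => deriv x₂ t / x₁ t ^ 2) hI hI' ?_ ht ht₀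
      intro s hs
      have hs0 := hne s hs
      refine ((dy s hs).2.div ((dx s hs).1.pow 2) (pow_ne_zero 2 hs0)).congr_deriv ?_
      rw [div_eq_zero_iff]
      left
      simp only [Pi.pow_apply]
      push_cast
      linear_combination x₁ s * h2 s hs
    rw [hc, ← h, div_mul_cancel₀ _ (pow_ne_zero 2 (hne t ht))]
  -- the logarithmic derivative of `x₁` satisfies `(ẋ¹/x¹)˙ = (ẋ²/x¹)² = c² (x¹)²`
  have dq : ∀ t ∈ I, HasDerivAt (fun t => deriv x₁ t / x₁ t) (c ^ 2 * x₁ t ^ 2) t := by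
    intro t ht
    have ht0 := hne t ht
    refine ((dx t ht).2.div (dx t ht).1 ht0).congr_deriv ?_
    rw [div_eq_iff (pow_ne_zero 2 ht0)]
    have h := h1 t ht
    rw [hv t ht] at h
    linear_combination h
  have hE : ∀ t ∈ I, c ^ 2 * x₁ t ^ 2 - (deriv x₁ t / x₁ t) ^ 2 = lam := by
    intro t ht
    have h : c ^ 2 * x₁ t ^ 2 - (deriv x₁ t / x₁ t) ^ 2
        = c ^ 2 * x₁ t₀ ^ 2 - (deriv x₁ t₀ / x₁ t₀) ^ 2 := by
      refine eq_of_hasDerivAt_zero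
        (f := fun t => c ^ 2 * x₁ t ^ 2 - (deriv x₁ t / x₁ t) ^ 2) hI hI' ?_ ht ht₀
      intro s hs
      have hs0 := hne s hs
      refine ((((dx s hs).1.pow 2).const_mul (c ^ 2)).sub ((dq s hs).pow 2)).congr_deriv ?_
      norm_num
      field_simp
      ring
    have ht00 := hne t₀ ht₀
    rw [h, hlam, hv t₀ ht₀]
    field_simp
  refine ⟨deriv x₁ t₀ / x₁ t₀ / c - x₂ t₀, fun t ht => ?_⟩
  have hB : deriv x₁ t / x₁ t / c - x₂ t = deriv x₁ t₀ / x₁ t₀ / c - x₂ t₀ := by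
    refine eq_of_hasDerivAt_zero
      (f := fun t => deriv x₁ t / x₁ t / c - x₂ t) hI hI' ?_ ht ht₀
    intro s hs
    refine (((dq s hs).div_const c).sub (dy s hs).1).congr_deriv ?_
    rw [hv s hs]
    field_simp
    ring
  rw [← hB, ← hE t ht]
  have ht0 := hne t ht
  field_simp
  ring
end

section
/- The exponential map of 𝕃² based at (1,0) omits the regions x² ≥ 1 + x¹ and x² ≤ −1 − x¹: every 𝕃²-geodesic σ = (x¹,x²) on an open interval I with σ(t₀) = (1,0) for some t₀ ∈ I satisfies |x²(t)| < 1 + x¹(t) for all t ∈ I. -/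
/-- The geodesic is contained in a hyperbola with conserved coefficients `c` and `v`; when `c = 0`
the second coordinate vanishes identically. -/
lemma IsL2Geodesic.hyperbola {I : Set ℝ} (hI : IsOpen I) (hI' : I.OrdConnected)
    {x y : ℝ → ℝ} (hgeo : IsL2Geodesic x y I)
    {t₀ : ℝ} (ht₀ : t₀ ∈ I) (h₁ : x t₀ = 1) (h₂ : y t₀ = 0) :
    ∃ c v : ℝ, (∀ t ∈ I, c * (x t ^ 2 - y t ^ 2) - 2 * v * y t = c) ∧
      (c = 0 → ∀ t ∈ I, y t = 0) := by
  obtain ⟨hx, hy, hpos, e₁, e₂⟩ := hgeo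
  have hconst : ∀ f : ℝ → ℝ, (∀ t ∈ I, HasDerivAt f 0 t) → ∀ t ∈ I, f t = f t₀ := fun f hf t ht =>
    hI.is_const_of_deriv_eq_zero hI'.isPreconnected
      (fun s hs => (hf s hs).differentiableAt.differentiableWithinAt)
      (fun s hs => (hf s hs).deriv) ht ht₀
  have d1 : ∀ {f : ℝ → ℝ}, ContDiffOn ℝ 2 f I → ∀ t ∈ I, HasDerivAt f (deriv f t) t :=
    fun hf t ht => ((hf.differentiableOn (by norm_num)).differentiableAt
      (hI.mem_nhds ht)).hasDerivAt
  have d2 : ∀ {f : ℝ → ℝ}, ContDiffOn ℝ 2 f I → ∀ t ∈ I,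
      HasDerivAt (deriv f) (deriv (deriv f) t) t := fun hf t ht =>
    (((hf.deriv_of_isOpen (m := 1) hI (by norm_num)).differentiableOn
      (by norm_num)).differentiableAt (hI.mem_nhds ht)).hasDerivAt
  obtain ⟨c, hc⟩ : ∃ c, ∀ t ∈ I, deriv y t = c * x t ^ 2 := by
    refine ⟨deriv y t₀ / x t₀ ^ 2, fun t ht => ?_⟩
    have hxt := (hpos t ht).ne'
    rw [← hconst (fun t => deriv y t / x t ^ 2) (fun s hs => ?_) t ht]
    · field_simp
    · have hxs := (hpos s hs).ne'
      refine ((d2 hy s hs).fun_div ((d1 hx s hs).fun_pow 2) (pow_ne_zero 2 hxs)).congr_deriv ?_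
      rw [div_eq_zero_iff]
      left
      push_cast
      linear_combination x s * e₂ s hs
  obtain ⟨v, hv⟩ : ∃ v, ∀ t ∈ I, deriv x t = x t * (c * y t + v) := by
    refine ⟨deriv x t₀ / x t₀ - c * y t₀, fun t ht => ?_⟩
    have hxt := (hpos t ht).ne'
    rw [← hconst (fun t => deriv x t / x t - c * y t) (fun s hs => ?_) t ht]
    · field_simp
      ring
    · have hxs := (hpos s hs).ne'
      refine (((d2 hx s hs).fun_div (d1 hx s hs) hxs).fun_sub
        ((d1 hy s hs).const_mul c)).congr_deriv ?_
      have h := e₁ s hs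
      rw [hc s hs] at h ⊢
      field_simp
      linear_combination h
  refine ⟨c, v, fun t ht => ?_, fun hc0 t ht => ?_⟩
  · rw [hconst (fun t => c * (x t ^ 2 - y t ^ 2) - 2 * v * y t) (fun s hs => ?_) t ht]
    · simp [h₁, h₂]
    · refine (((((d1 hx s hs).fun_pow 2).fun_sub ((d1 hy s hs).fun_pow 2)).const_mul c).fun_sub
        ((d1 hy s hs).const_mul (2 * v))).congr_deriv ?_
      rw [hc s hs, hv s hs]
      push_cast
      ring
  · rw [hconst y (fun s hs => (d1 hy s hs).congr_deriv (by simp [hc s hs, hc0])) t ht, h₂]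

lemma IsL2Geodesic.lt_one_add {I : Set ℝ} (hI : IsOpen I) (hI' : I.OrdConnected)
    {x y : ℝ → ℝ} (hgeo : IsL2Geodesic x y I)
    {t₀ : ℝ} (ht₀ : t₀ ∈ I) (h₁ : x t₀ = 1) (h₂ : y t₀ = 0) :
    ∀ t ∈ I, y t < 1 + x t := by
  obtain ⟨c, v, hF, hc0⟩ := hgeo.hyperbola hI hI' ht₀ h₁ h₂
  obtain ⟨hx, hy, hpos, -, -⟩ := hgeo
  intro t ht
  by_contra! hcon
  obtain ⟨s, hs, hs'⟩ : ∃ s ∈ I, y s - x s = 1 :=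
    hI'.isPreconnected.intermediate_value ht₀ ht (f := fun t => y t - x t)
      (hy.continuousOn.sub hx.continuousOn)
      ⟨by simp only [h₁, h₂]; norm_num, by linarith⟩
  obtain ⟨r, hr, hr'⟩ : ∃ r ∈ I, y r = 1 :=
    hI'.isPreconnected.intermediate_value ht₀ hs hy.continuousOn
      ⟨by simp [h₂], by linarith [hpos s hs]⟩
  have hys : y s = 1 + x s := by linarith
  have hcv : v = -c := by
    have h := hF s hs
    rw [hys] at h
    have h0 : (c + v) * (1 + x s) = 0 := by linear_combination -h / 2
    have := (mul_eq_zero.1 h0).resolve_right (by linarith [hpos s hs])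
    linarith
  have hc : c = 0 := by
    have h := hF r hr
    rw [hr', hcv] at h
    have h0 : c * x r ^ 2 = 0 := by linear_combination h
    exact (mul_eq_zero.1 h0).resolve_right (pow_ne_zero 2 (hpos r hr).ne')
  linarith [hc0 hc r hr]

lemma IsL2Geodesic.neg {I : Set ℝ} {x y : ℝ → ℝ} (hgeo : IsL2Geodesic x y I) :
    IsL2Geodesic x (fun t => -y t) I := by
  obtain ⟨hx, hy, hpos, e₁, e₂⟩ := hgeo
  have hd : deriv (fun t => -y t) = fun t => -deriv y t := funext fun t => deriv.fun_neg
  have hdd : ∀ t, deriv (fun t => -deriv y t) t = -deriv (deriv y) t := fun t => deriv.fun_neg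
  refine ⟨hx, hy.neg, hpos, fun t ht => ?_, fun t ht => ?_⟩
  · simp only [hd]
    linear_combination e₁ t ht
  · simp only [hd, hdd]
    linear_combination -e₂ t ht

/-- The exponential map of 𝕃² based at (1,0) omits the regions
x² ≥ 1 + x¹ and x² ≤ −1 − x¹: every 𝕃²-geodesic through (1,0) satisfies
|x²| < 1 + x¹. -/
theorem L2_exp_omits_region (I : Set ℝ) (hI : IsOpen I) (hI' : I.OrdConnected)
    (x₁ x₂ : ℝ → ℝ) (hgeo : IsL2Geodesic x₁ x₂ I)
    (t₀ : ℝ) (ht₀ : t₀ ∈ I) (h₁ : x₁ t₀ = 1) (h₂ : x₂ t₀ = 0) :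
    ∀ t ∈ I, |x₂ t| < 1 + x₁ t := by
  intro t ht
  have h := hgeo.neg.lt_one_add hI hI' ht₀ h₁ (by simp [h₂]) t ht
  exact abs_lt.2 ⟨by linarith, hgeo.lt_one_add hI hI' ht₀ h₁ h₂ t ht⟩
end

section
/- Geodesics of the pseudosphere extend for infinite time: for every p ∈ S and every v ∈ ℝ³ with B(p,v) = 0, there exists a smooth curve σ : ℝ → ℝ³ with σ(t) ∈ S for all t ∈ ℝ, σ(0) = p, σ'(0) = v, and σ''(t) = −B(v,v)·σ(t) for all t ∈ ℝ. (Curves in S whose second derivative is pointwise proportional to the position vector are exactly the geodesics of the induced connection on S, so this states geodesic completeness of 𝕊².) -/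
/-!
The geodesic through `p` with velocity `v` is the explicit curve `σ t = c t • p + s t • v`, where
`c` and `s` are the generalized cosine and sine of curvature `k = B(v,v)`: the solutions of
`c' = -k s`, `s' = c` with `c 0 = 1`, `s 0 = 0`. They are defined on all of `ℝ` whatever the sign
of `k` (circular functions for spacelike `v`, affine ones for null `v`, hyperbolic ones for
timelike `v`; see `exists_generalized_cos_sin`), and `σ'' = -k σ` is immediate. The curve stays on
the pseudosphere since `B(σ,σ) = c² + k s²` by `B(p,p) = 1` and `B(p,v) = 0`, and this is `1` by
the Pythagorean identity.
-/

/-- The Lorentzian bilinear form B(x,y) = x₁y₁ + x₂y₂ − x₃y₃ on ℝ³. -/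
def lorentzB (x y : Fin 3 → ℝ) : ℝ := x 0 * y 0 + x 1 * y 1 - x 2 * y 2

/-- Generalized cosine and sine of constant curvature `k`, for `k` of any sign. -/
theorem exists_generalized_cos_sin (k : ℝ) :
    ∃ c s : ℝ → ℝ, ContDiff ℝ (⊤ : ℕ∞) c ∧ ContDiff ℝ (⊤ : ℕ∞) s ∧
      c 0 = 1 ∧ s 0 = 0 ∧ (∀ t, HasDerivAt c (-k * s t) t) ∧ (∀ t, HasDerivAt s (c t) t) ∧
      ∀ t, c t ^ 2 + k * s t ^ 2 = 1 := by
  rcases lt_trichotomy k 0 with hk | rfl | hk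
  · obtain ⟨w, hw, rfl⟩ : ∃ w : ℝ, w ≠ 0 ∧ k = -w ^ 2 :=
      ⟨√(-k), (Real.sqrt_pos.2 (by linarith)).ne', by rw [Real.sq_sqrt (by linarith)]; ring⟩
    have hlin (t : ℝ) : HasDerivAt (fun t => w * t) w t := by
      simpa using (hasDerivAt_id t).const_mul w
    refine ⟨fun t => Real.cosh (w * t), fun t => Real.sinh (w * t) / w, by fun_prop, by fun_prop,
      by simp, by simp, fun t => ?_, fun t => ?_, fun t => ?_⟩
    · convert (hlin t).cosh using 1
      field_simp
    · exact ((hlin t).sinh.div_const w).congr_deriv (mul_div_cancel_right₀ _ hw)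
    · have := Real.cosh_sq (w * t)
      field_simp
      linarith
  · refine ⟨fun _ => 1, fun t => t, by fun_prop, by fun_prop, rfl, rfl, fun t => ?_, fun t => ?_,
      fun t => by ring⟩
    · simpa using hasDerivAt_const t (1 : ℝ)
    · exact hasDerivAt_id t
  · obtain ⟨w, hw, rfl⟩ : ∃ w : ℝ, w ≠ 0 ∧ k = w ^ 2 :=
      ⟨√k, (Real.sqrt_pos.2 hk).ne', (Real.sq_sqrt hk.le).symm⟩
    have hlin (t : ℝ) : HasDerivAt (fun t => w * t) w t := by
      simpa using (hasDerivAt_id t).const_mul w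
    refine ⟨fun t => Real.cos (w * t), fun t => Real.sin (w * t) / w, by fun_prop, by fun_prop,
      by simp, by simp, fun t => ?_, fun t => ?_, fun t => ?_⟩
    · convert (hlin t).cos using 1
      field_simp
    · exact ((hlin t).sin.div_const w).congr_deriv (mul_div_cancel_right₀ _ hw)
    · have := Real.cos_sq_add_sin_sq (w * t)
      field_simp
      linarith

/-- Geodesics of the pseudosphere S = {x : B(x,x) = 1} extend
for infinite time: for every p ∈ S and every v tangent to S at p (B(p,v) = 0)
there is a smooth curve σ : ℝ → ℝ³ lying in S with σ(0) = p, σ'(0) = v and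
σ''(t) = −B(v,v)·σ(t) for all t. -/
theorem pseudosphere_geodesically_complete (p v : Fin 3 → ℝ)
    (hp : lorentzB p p = 1) (hv : lorentzB p v = 0) :
    ∃ σ : ℝ → (Fin 3 → ℝ), ContDiff ℝ (⊤ : ℕ∞) σ ∧
      (∀ t : ℝ, lorentzB (σ t) (σ t) = 1) ∧
      σ 0 = p ∧ deriv σ 0 = v ∧
      (∀ t : ℝ, deriv (deriv σ) t = (-(lorentzB v v)) • σ t) := by
  obtain ⟨c, s, hcs, hss, hc0, hs0, hc, hs, hone⟩ := exists_generalized_cos_sin (lorentzB v v)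
  have hderiv : deriv (fun t => c t • p + s t • v) =
      fun t => (-(lorentzB v v) * s t) • p + c t • v :=
    funext fun t => (((hc t).smul_const p).add ((hs t).smul_const v)).deriv
  refine ⟨fun t => c t • p + s t • v, by fun_prop, fun t => ?_, by simp [hc0, hs0], ?_,
    fun t => ?_⟩
  · have hB : lorentzB (c t • p + s t • v) (c t • p + s t • v) =
        c t ^ 2 * lorentzB p p + 2 * c t * s t * lorentzB p v + s t ^ 2 * lorentzB v v := by
      simp only [lorentzB, Pi.add_apply, Pi.smul_apply, smul_eq_mul]
      ring
    rw [hB, hp, hv]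
    linarith [hone t]
  · simp [hderiv, hc0, hs0]
  · rw [hderiv]
    refine ((((hs t).const_mul _).smul_const p).add ((hc t).smul_const v)).deriv.trans ?_
    simp only [smul_add, smul_smul]
end
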